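/- The SW mechanism satisfies ε-local differential privacy: for every ε > 0, all inputs v, v' ∈ [0,1], and every output x ∈ [−b, 1+b], the densities satisfy ρ_v(x) ≤ e^ε · ρ_{v'}(x), where ρ_v denotes the SW density with input v. -/

import Mathlib

open Real

/-- The two-level density of the square wave mechanism at the input `v`: `p` on the closed band of
half-width `b` around `v`, `q` on the rest of `[-b, 1 + b]`, and `0` elsewhere. The levels `p` and
`q` are free parameters, and neither `v` nor the band is required to lie in the output range. -/
noncomputable def squareWave (b p q v x : ℝ) : ℝ :=
  if x ∈ Set.Icc (v - b) (v + b) then p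
  else if x ∈ Set.Icc (-b) (1 + b) then q else 0

theorem squareWave_mem_Icc {b p q x : ℝ} (hqp : q ≤ p) (hx : x ∈ Set.Icc (-b) (1 + b)) (v : ℝ) :
    squareWave b p q v x ∈ Set.Icc q p := by
  rw [squareWave, if_pos hx]
  split_ifs
  · exact Set.right_mem_Icc.2 hqp
  · exact Set.left_mem_Icc.2 hqp

theorem squareWave_le_mul_squareWave {b c p q x : ℝ} (hc : 0 ≤ c) (hqp : q ≤ p) (hpq : p ≤ c * q)
    (hx : x ∈ Set.Icc (-b) (1 + b)) (v v' : ℝ) :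
    squareWave b p q v x ≤ c * squareWave b p q v' x :=
  calc
    squareWave b p q v x ≤ p := (squareWave_mem_Icc hqp hx v).2
    _ ≤ c * q := hpq
    _ ≤ c * squareWave b p q v' x :=
      mul_le_mul_of_nonneg_left (squareWave_mem_Icc hqp hx v').1 hc

theorem mul_exp_sub_exp_add_one_pos {ε : ℝ} (hε : ε ≠ 0) : 0 < ε * exp ε - exp ε + 1 :=
  calc
    0 < exp ε * (exp (-ε) - (1 - ε)) :=
      mul_pos (exp_pos ε) (sub_pos.2 (one_sub_lt_exp_neg hε))
    _ = ε * exp ε - exp ε + 1 := by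
      rw [mul_sub, ← exp_add, add_neg_cancel, exp_zero]
      ring

theorem squareWave_halfWidth_pos {ε : ℝ} (hε : ε ≠ 0) :
    0 < (ε * exp ε - exp ε + 1) / (2 * exp ε * (exp ε - ε - 1)) := by
  have hden : 0 < exp ε - ε - 1 := by linarith [add_one_lt_exp hε]
  exact div_pos (mul_exp_sub_exp_add_one_pos hε) (by positivity)

theorem sw_ldp_general {ε b p q : ℝ} (hε : 0 ≤ ε) (hb : 0 ≤ b)
    (hp : p = exp ε / (2 * b * exp ε + 1))
    (hq : q = 1 / (2 * b * exp ε + 1))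
    {ρ : ℝ → ℝ → ℝ}
    (hρ : ∀ v x, ρ v x =
      if x ∈ Set.Icc (v - b) (v + b) then p
      else if x ∈ Set.Icc (-b) (1 + b) then q else 0)
    (v v' : ℝ) {x : ℝ} (hx : x ∈ Set.Icc (-b) (1 + b)) :
    ρ v x ≤ exp ε * ρ v' x := by
  obtain rfl : ρ = squareWave b p q := funext₂ hρ
  have hqp : q ≤ p := by
    rw [hp, hq]
    gcongr
    exact one_le_exp hε
  have hpq : p = exp ε * q := by rw [hp, hq, mul_one_div]
  exact squareWave_le_mul_squareWave (exp_pos ε).le hqp hpq.le hx v v'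

/-- The SW mechanism satisfies `ε`-local differential privacy: for all inputs
`v, v' ∈ [0,1]` and every output `x ∈ [−b, 1+b]`, the densities satisfy
`ρ_v(x) ≤ e^ε · ρ_{v'}(x)`. -/
theorem sw_ldp (ε : ℝ) (hε : 0 < ε)
    (b p q : ℝ)
    (hb : b = (ε * exp ε - exp ε + 1) / (2 * exp ε * (exp ε - ε - 1)))
    (hp : p = exp ε / (2 * b * exp ε + 1))
    (hq : q = 1 / (2 * b * exp ε + 1))
    (ρ : ℝ → ℝ → ℝ)
    (hρ : ∀ v x, ρ v x =
      if x ∈ Set.Icc (v - b) (v + b) then p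
      else if x ∈ Set.Icc (-b) (1 + b) then q else 0) :
    ∀ v ∈ Set.Icc (0 : ℝ) 1, ∀ v' ∈ Set.Icc (0 : ℝ) 1, ∀ x ∈ Set.Icc (-b) (1 + b),
      ρ v x ≤ exp ε * ρ v' x := by
  have hb_pos : 0 < b := hb ▸ squareWave_halfWidth_pos hε.ne'
  exact fun v _ v' _ x hx => sw_ldp_general hε.le hb_pos.le hp hq hρ v v' hx
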